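/- Let k ≥ 4, let G be a k-Ore graph, and let R be a nonempty proper subset of V(G). Then ρ_{k,G}(R) ≥ (k+1)(k−2). -/

import Mathlib

open SimpleGraph

section Defs

variable {V : Type*}

instance instDecidableInduceAdj (G : SimpleGraph V) [DecidableRel G.Adj] (s : Set V) :
    DecidableRel (G.induce s).Adj := fun a b => ‹DecidableRel G.Adj› a.1 b.1

instance instDecidableDeleteEdgeAdj [DecidableEq V] (G : SimpleGraph V) [DecidableRel G.Adj]
    (e : Sym2 V) : DecidableRel (G.deleteEdges {e}).Adj := fun a b =>
  decidable_of_iff (G.Adj a b ∧ ¬s(a, b) = e) (by simp)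

/-- The `k`-potential of a vertex subset `R` of a graph `G`:
`ρ_{k,G}(R) = (k+1)(k-2)|R| - 2(k-1)|E(G[R])|`, where `G[R]` is the induced subgraph. -/
def potential (k : ℕ) (G : SimpleGraph V) [Fintype V] [DecidableEq V] [DecidableRel G.Adj]
    (R : Finset V) : ℤ :=
  ((k : ℤ) + 1) * ((k : ℤ) - 2) * R.card
    - 2 * ((k : ℤ) - 1) * ((G.induce (R : Set V)).edgeFinset.card)

/-- A graph is `k`-critical if its chromatic number is `k` and every proper subgraph is
`(k-1)`-colorable. -/
def IsKCritical (k : ℕ) (G : SimpleGraph V) : Prop :=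
  G.chromaticNumber = k ∧ ∀ H : SimpleGraph V, H < G → H.Colorable (k - 1)

/-- The graph underlying the DHGO-composition: delete the edge `xy` from `G₁`, split the vertex
`z` of `G₂` into two vertices, identify `x` with the half of `z` joined to the neighbors of `z`
lying in `P` and identify `y` with the half joined to the remaining neighbors of `z`. -/
def dhgoGraph {V₁ V₂ : Type*} (G₁ : SimpleGraph V₁) (G₂ : SimpleGraph V₂)
    (x y : V₁) (z : V₂) (P : Set V₂) :
    SimpleGraph (V₁ ⊕ {w : V₂ // w ≠ z}) :=
  SimpleGraph.fromRel (fun a b =>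
    match a, b with
    | Sum.inl a, Sum.inl b => G₁.Adj a b ∧ s(a, b) ≠ s(x, y)
    | Sum.inl a, Sum.inr b => (a = x ∧ (b : V₂) ∈ P) ∨ (a = y ∧ (b : V₂) ∈ G₂.neighborSet z \ P)
    | Sum.inr a, Sum.inr b => G₂.Adj a b
    | _, _ => False)

/-- `G` is a DHGO-composition of `G₁` and `G₂`: some edge `xy` of `G₁` is deleted, some vertex
`z` of `G₂` is split into two vertices of positive degree (its neighborhood is partitioned into
two nonempty parts `P` and `N(z) \ P`), and `x`, `y` are identified with the two halves of `z`. -/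
def IsDHGO {V₁ V₂ U : Type*} (G : SimpleGraph U) (G₁ : SimpleGraph V₁) (G₂ : SimpleGraph V₂) :
    Prop :=
  ∃ (x y : V₁) (z : V₂) (P : Set V₂),
    G₁.Adj x y ∧ P ⊆ G₂.neighborSet z ∧ P.Nonempty ∧ (G₂.neighborSet z \ P).Nonempty ∧
    Nonempty (G ≃g dhgoGraph G₁ G₂ x y z P)

/-- `k`-Ore graphs on the canonical finite vertex types `Fin n`: graphs obtained from copies of
`K_k` by a sequence of DHGO-compositions. -/
inductive IsOreFin (k : ℕ) : ∀ {n : ℕ}, SimpleGraph (Fin n) → Prop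
  | complete {n : ℕ} {G : SimpleGraph (Fin n)}
      (h : Nonempty (G ≃g (⊤ : SimpleGraph (Fin k)))) : IsOreFin k G
  | comp {n₁ n₂ n : ℕ} {G₁ : SimpleGraph (Fin n₁)} {G₂ : SimpleGraph (Fin n₂)}
      {G : SimpleGraph (Fin n)} (h₁ : IsOreFin k G₁) (h₂ : IsOreFin k G₂)
      (h : IsDHGO G G₁ G₂) : IsOreFin k G

/-- A graph is a `k`-Ore graph if it is obtained from copies of `K_k` by a sequence of
DHGO-compositions. -/
def IsKOre (k : ℕ) {V : Type*} (G : SimpleGraph V) : Prop :=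
  ∃ (n : ℕ) (H : SimpleGraph (Fin n)), IsOreFin k H ∧ Nonempty (G ≃g H)

/-- `y_k = max {2k - 6, k² - 5k + 2}`. -/
def yk (k : ℕ) : ℤ := max (2 * (k : ℤ) - 6) ((k : ℤ) ^ 2 - 5 * (k : ℤ) + 2)

/-- A `k`-critical graph is `k`-extremal if `2(k-1)|E(G)| = (k+1)(k-2)|V(G)| - k(k-3)`. -/
def IsKExtremal (k : ℕ) {V : Type*} [Fintype V] [DecidableEq V] (G : SimpleGraph V)
    [DecidableRel G.Adj] : Prop :=
  IsKCritical k G ∧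
    2 * ((k : ℤ) - 1) * G.edgeFinset.card =
      ((k : ℤ) + 1) * ((k : ℤ) - 2) * Fintype.card V - (k : ℤ) * ((k : ℤ) - 3)

/-- A graph is 3-connected if it has more than 3 vertices and deleting any set of at most 2
vertices leaves it connected. -/
def IsThreeConnected {V : Type*} [Fintype V] (G : SimpleGraph V) : Prop :=
  3 < Fintype.card V ∧ ∀ s : Set V, s.ncard ≤ 2 → (G.induce sᶜ).Connected

/-- `Q` is a `k`-quasi-`xy`-vertex: `G[Q]` is `(k-1)`-colorable, every proper `(k-1)`-coloring
of `G[Q]` gives `x` and `y` the same color, and for every edge `e` of `G[Q]` the graph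
`G[Q] - e` has a proper `(k-1)`-coloring giving `x` and `y` different colors. -/
def IsQuasiVertex (k : ℕ) {V : Type*} [DecidableEq V] (G : SimpleGraph V) (x y : V)
    (Q : Set V) : Prop :=
  ∃ (hx : x ∈ Q) (hy : y ∈ Q),
    (G.induce Q).Colorable (k - 1) ∧
    (∀ C : (G.induce Q).Coloring (Fin (k - 1)), C ⟨x, hx⟩ = C ⟨y, hy⟩) ∧
    (∀ a b : Q, (G.induce Q).Adj a b →
      ∃ C : ((G.induce Q).deleteEdges {s(a, b)}).Coloring (Fin (k - 1)),
        C ⟨x, hx⟩ ≠ C ⟨y, hy⟩)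

/-- A set `S` of vertices is standard if `ρ_{k,G}(S) = (k+1)(k-2)`, `G` has a separating set
`{x,y} ⊆ S` such that `S - {x,y}` induces a component of `G - {x,y}`, and `S` is a
`k`-quasi-`xy`-vertex. -/
def IsStandardSet (k : ℕ) {V : Type*} [Fintype V] [DecidableEq V] (G : SimpleGraph V)
    [DecidableRel G.Adj] (S : Finset V) : Prop :=
  potential k G S = ((k : ℤ) + 1) * ((k : ℤ) - 2) ∧
  ∃ x y : V, x ≠ y ∧ x ∈ S ∧ y ∈ S ∧
    ¬(G.induce ({x, y}ᶜ : Set V)).Connected ∧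
    (G.induce ((S : Set V) \ {x, y})).Connected ∧
    (∀ a ∈ (S : Set V) \ {x, y}, ∀ b : V, G.Adj a b → b ∈ (S : Set V) ∪ {x, y}) ∧
    IsQuasiVertex k G x y (S : Set V)

end Defs

/-!
Deleting `z` from `G₂` and `xy` from `G₁` leaves two disjoint induced pieces of a DHGO-composition,
so its potential splits as a sum over the pieces, up to the edges that were attached to `z`. A set
that meets `{x, y}` is compared with the corresponding set of `G₂` *together with* `z`: if both `x`
and `y` are present the missing edge `xy` gains `2(k-1)`, and if only one is, then each edge going
to the other half of `z` does. By induction on the construction, the whole vertex set of a `k`-Ore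
graph has potential `k(k-3)`, which is exactly `2(k-1)` less than the bound `(k+1)(k-2)` claimed for
the nonempty proper subsets, so that the gain always suffices.
-/

section Potential

open Finset

variable {V W : Type*} (G : SimpleGraph V) [DecidableRel G.Adj]

lemma two_mul_card_edgeFinset_induce (R : Finset V) :
    2 * #(G.induce (R : Set V)).edgeFinset = #(G.interedges R R) := by
  have interedges_eq_map : G.interedges R R =
      ({p : R × R | G.Adj p.1 p.2} : Finset (R × R)).map
        ((Function.Embedding.subtype _).prodMap (.subtype _)) := by
    ext ⟨u, v⟩
    simp [mk_mem_interedges_iff, and_left_comm, and_comm]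
  rw [two_mul_card_edgeFinset, interedges_eq_map, card_map]
  rfl

variable (k : ℕ) [Fintype V] [DecidableEq V] [Fintype W] [DecidableEq W]

lemma potential_eq_sub_card_interedges (R : Finset V) :
    potential k G R = ((k : ℤ) + 1) * ((k : ℤ) - 2) * #R
      - ((k : ℤ) - 1) * #(G.interedges R R) := by
  rw [potential, ← two_mul_card_edgeFinset_induce]
  push_cast
  ring

@[simp]
lemma potential_empty : potential k G ∅ = 0 := by
  simp [potential_eq_sub_card_interedges]

@[simp]
lemma potential_singleton (v : V) : potential k G {v} = ((k : ℤ) + 1) * ((k : ℤ) - 2) := by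
  simp [potential_eq_sub_card_interedges, interedges_def, filter_singleton]

lemma potential_top (R : Finset V) :
    potential k (⊤ : SimpleGraph V) R =
      ((k : ℤ) + 1) * ((k : ℤ) - 2) * #R - ((k : ℤ) - 1) * (#R * (#R - 1)) := by
  have interedges_eq : (⊤ : SimpleGraph V).interedges R R = R.offDiag := by
    ext ⟨u, v⟩
    simp [mk_mem_interedges_iff]
  rw [potential_eq_sub_card_interedges, interedges_eq, offDiag_card,
    Nat.cast_sub (Nat.le_mul_self _)]
  push_cast
  ring

variable {G} in
lemma potential_map {H : SimpleGraph W} [DecidableRel H.Adj] (f : G ↪g H) (R : Finset V) :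
    potential k H (R.map f.toEmbedding) = potential k G R := by
  have interedges_map : H.interedges (R.map f.toEmbedding) (R.map f.toEmbedding) =
      (G.interedges R R).map (f.toEmbedding.prodMap f.toEmbedding) := by
    rw [interedges_def, interedges_def, ← prodMap_map_product, filter_map]
    simp [Function.comp_def]
  rw [potential_eq_sub_card_interedges, potential_eq_sub_card_interedges, interedges_map,
    card_map, card_map]

lemma potential_union_of_disjoint {S T : Finset V} (hST : Disjoint S T) :
    potential k G (S ∪ T) =
      potential k G S + potential k G T - 2 * ((k : ℤ) - 1) * #(G.interedges S T) := by
  have card_interedges_union : #(G.interedges (S ∪ T) (S ∪ T)) =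
      #(G.interedges S S) + #(G.interedges T T) + 2 * #(G.interedges S T) := by
    have card_interedges_symm : #(G.interedges T S) = #(G.interedges S T) :=
      have := G.symm
      Rel.card_interedges_comm T S
    have union_left (U : Finset V) :
        G.interedges (S ∪ T) U = G.interedges S U ∪ G.interedges T U := by
      simp only [interedges_def, union_product, filter_union]
    have union_right (U : Finset V) :
        G.interedges U (S ∪ T) = G.interedges U S ∪ G.interedges U T := by
      simp only [interedges_def, product_union, filter_union]
    rw [union_left, card_union_of_disjoint (G.interedges_disjoint_left hST _),
      union_right, card_union_of_disjoint (G.interedges_disjoint_right _ hST),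
      union_right, card_union_of_disjoint (G.interedges_disjoint_right _ hST),
      card_interedges_symm]
    ring
  simp only [potential_eq_sub_card_interedges, card_interedges_union, card_union_of_disjoint hST]
  push_cast
  ring

lemma potential_insert_of_notMem {v : V} {T : Finset V} (hv : v ∉ T) :
    potential k G (insert v T) = ((k : ℤ) + 1) * ((k : ℤ) - 2) + potential k G T
      - 2 * ((k : ℤ) - 1) * #{w ∈ T | G.Adj v w} := by
  have card_interedges_singleton : #(G.interedges {v} T) = #{w ∈ T | G.Adj v w} := by
    simp [interedges_def, singleton_product, filter_map]
  rw [insert_eq, potential_union_of_disjoint G k (disjoint_singleton_left.2 hv),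
    potential_singleton, card_interedges_singleton]

variable {G} in
lemma potential_deleteEdges_singleton {x y : V} (hxy : G.Adj x y) (R : Finset V) :
    potential k (G.deleteEdges {s(x, y)}) R =
      potential k G R + 2 * ((k : ℤ) - 1) * (if x ∈ R ∧ y ∈ R then 1 else 0) := by
  have interedges_deleteEdges : (G.deleteEdges {s(x, y)}).interedges R R =
      ((G.interedges R R).erase (x, y)).erase (y, x) := by
    ext ⟨u, v⟩
    simp only [mk_mem_interedges_iff, deleteEdges_adj, mem_erase, Set.mem_singleton_iff,
      Sym2.eq_iff, Prod.mk.injEq, ne_eq]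
    tauto
  rw [potential_eq_sub_card_interedges, potential_eq_sub_card_interedges,
    interedges_deleteEdges]
  split_ifs with h
  · have hxy_mem : (x, y) ∈ G.interedges R R := G.mk_mem_interedges_iff.2 ⟨h.1, h.2, hxy⟩
    have hyx_mem : (y, x) ∈ (G.interedges R R).erase (x, y) := by
      simp [mk_mem_interedges_iff, h, hxy.symm, hxy.ne]
    rw [← card_erase_add_one hxy_mem, ← card_erase_add_one hyx_mem]
    push_cast
    ring
  · have hxy_notMem : (x, y) ∉ G.interedges R R := by
      simpa [mk_mem_interedges_iff, hxy] using h
    have hyx_notMem : (y, x) ∉ G.interedges R R := by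
      simpa [mk_mem_interedges_iff, hxy.symm, and_comm] using h
    rw [erase_eq_of_notMem hxy_notMem, erase_eq_of_notMem hyx_notMem]
    ring

end Potential

section DHGO

open Finset

variable {V₁ V₂ : Type*} (G₁ : SimpleGraph V₁) (G₂ : SimpleGraph V₂)
  (x y : V₁) (z : V₂) (P : Set V₂)

lemma dhgoGraph_adj_inl_inl {a b : V₁} :
    (dhgoGraph G₁ G₂ x y z P).Adj (.inl a) (.inl b) ↔ (G₁.deleteEdges {s(x, y)}).Adj a b := by
  simp only [dhgoGraph, fromRel_adj, deleteEdges_adj, Set.mem_singleton_iff, ne_eq,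
    Sum.inl.injEq, G₁.adj_comm b a, Sym2.eq_swap (a := b), or_self, and_iff_right_iff_imp]
  exact fun h => h.1.ne

lemma dhgoGraph_adj_inr_inr {a b : {w : V₂ // w ≠ z}} :
    (dhgoGraph G₁ G₂ x y z P).Adj (.inr a) (.inr b) ↔ G₂.Adj a b := by
  simp only [dhgoGraph, fromRel_adj, ne_eq, Sum.inr.injEq, Subtype.ext_iff, G₂.adj_comm b a,
    or_self, and_iff_right_iff_imp]
  exact Adj.ne

lemma dhgoGraph_adj_inl_inr {a : V₁} {b : {w : V₂ // w ≠ z}} :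
    (dhgoGraph G₁ G₂ x y z P).Adj (.inl a) (.inr b) ↔
      a = x ∧ (b : V₂) ∈ P ∨ a = y ∧ (b : V₂) ∈ G₂.neighborSet z \ P := by
  simp [dhgoGraph]

/-- The copy of `G₁ - xy` inside a DHGO-composition. -/
def dhgoGraphInl : G₁.deleteEdges {s(x, y)} ↪g dhgoGraph G₁ G₂ x y z P where
  toEmbedding := .inl
  map_rel_iff' := dhgoGraph_adj_inl_inl G₁ G₂ x y z P

/-- The copy of `G₂ - z` inside a DHGO-composition. -/
def dhgoGraphInr :
    G₂.comap (Function.Embedding.subtype (· ≠ z)) ↪g dhgoGraph G₁ G₂ x y z P where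
  toEmbedding := .inr
  map_rel_iff' := dhgoGraph_adj_inr_inr G₁ G₂ x y z P

variable [DecidableEq V₁] [DecidableRel G₂.Adj] [DecidablePred (· ∈ P)]
  [DecidableRel (dhgoGraph G₁ G₂ x y z P).Adj]

variable {x y} in
lemma card_interedges_dhgoGraph_inl_inr (hxy : x ≠ y) (R₁ : Finset V₁)
    (R₂ : Finset {w : V₂ // w ≠ z}) :
    #((dhgoGraph G₁ G₂ x y z P).interedges (R₁.map .inl) (R₂.map .inr)) =
      (if x ∈ R₁ then #{w ∈ R₂.map (.subtype _) | w ∈ P} else 0) +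
      (if y ∈ R₁ then #{w ∈ R₂.map (.subtype _) | w ∈ G₂.neighborSet z \ P} else 0) := by
  have card_neighbors (u : V₁) :
      #{w ∈ R₂ | (dhgoGraph G₁ G₂ x y z P).Adj (.inl u) (.inr w)} =
        (if x = u then #{w ∈ R₂.map (.subtype _) | w ∈ P} else 0) +
        (if y = u then #{w ∈ R₂.map (.subtype _) | w ∈ G₂.neighborSet z \ P} else 0) := by
    simp only [dhgoGraph_adj_inl_inr, filter_map, card_map]
    split_ifs with hx hy hy
    · exact absurd (hx.trans hy.symm) hxy
    · rw [add_zero]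
      exact congrArg card (filter_congr fun w _ => by simp [← hx, hxy])
    · rw [zero_add]
      exact congrArg card (filter_congr fun w _ => by simp [← hy, hxy.symm])
    · simp [Ne.symm hx, Ne.symm hy]
  calc #((dhgoGraph G₁ G₂ x y z P).interedges (R₁.map .inl) (R₂.map .inr))
      = ∑ u ∈ R₁, #{w ∈ R₂ | (dhgoGraph G₁ G₂ x y z P).Adj (.inl u) (.inr w)} := by
        simp only [interedges_def, card_filter, sum_product, sum_map,
          Function.Embedding.inl_apply, Function.Embedding.inr_apply]
    _ = _ := by simp only [card_neighbors, sum_add_distrib, sum_ite_eq]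

variable {G₂ z P} in
lemma card_filter_adj_eq_add (hP : P ⊆ G₂.neighborSet z) (T : Finset V₂) :
    #{w ∈ T | G₂.Adj z w} = #{w ∈ T | w ∈ P} + #{w ∈ T | w ∈ G₂.neighborSet z \ P} := by
  rw [← card_filter_add_card_filter_not (s := {w ∈ T | G₂.Adj z w}) (· ∈ P), filter_filter,
    filter_filter]
  congr 2 with w
  simpa using fun _ => @hP w

lemma insert_map_subtype_eq_univ [Fintype V₂] [DecidableEq V₂] {z : V₂}
    {R : Finset {w : V₂ // w ≠ z}} : insert z (R.map (.subtype _)) = univ ↔ R = univ := by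
  simp only [eq_univ_iff_forall, mem_insert, mem_map, Function.Embedding.subtype_apply,
    Subtype.exists, exists_and_right, exists_eq_right, Subtype.forall]
  exact forall_congr' fun w =>
    ⟨fun h hw => (h.resolve_left hw).2, fun h => or_iff_not_imp_left.2 fun hw => ⟨hw, h hw⟩⟩

variable [Fintype V₁] [DecidableRel G₁.Adj] [Fintype V₂] [DecidableEq V₂]

variable {x y} in
lemma potential_dhgoGraph_disjSum (k : ℕ) (hxy : G₁.Adj x y) (R₁ : Finset V₁)
    (R₂ : Finset {w : V₂ // w ≠ z}) :
    potential k (dhgoGraph G₁ G₂ x y z P) (R₁.disjSum R₂) =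
      potential k G₁ R₁ + potential k G₂ (R₂.map (.subtype _)) + 2 * ((k : ℤ) - 1) *
        ((if x ∈ R₁ ∧ y ∈ R₁ then 1 else 0) -
          (if x ∈ R₁ then #{w ∈ R₂.map (.subtype _) | w ∈ P} else 0) -
          (if y ∈ R₁ then #{w ∈ R₂.map (.subtype _) | w ∈ G₂.neighborSet z \ P} else 0)) := by
  have potential_inl : potential k (dhgoGraph G₁ G₂ x y z P) (R₁.map .inl) =
      potential k (G₁.deleteEdges {s(x, y)}) R₁ :=
    potential_map k (dhgoGraphInl G₁ G₂ x y z P) R₁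
  have potential_inr : potential k (dhgoGraph G₁ G₂ x y z P) (R₂.map .inr) =
      potential k G₂ (R₂.map (.subtype _)) :=
    (potential_map k (dhgoGraphInr G₁ G₂ x y z P) R₂).trans
      (potential_map k (Embedding.comap (.subtype (· ≠ z)) G₂) R₂).symm
  rw [← map_inl_disjUnion_map_inr, disjUnion_eq_union,
    potential_union_of_disjoint _ _ (disjoint_map_inl_map_inr R₁ R₂), potential_inl, potential_inr,
    potential_deleteEdges_singleton k hxy, card_interedges_dhgoGraph_inl_inr G₁ G₂ z P hxy.ne]
  push_cast
  ring

variable {R₁ : Finset V₁} {R₂ : Finset {w : V₂ // w ≠ z}}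
variable {G₁ G₂ x y z P} (k : ℕ) (hxy : G₁.Adj x y) (hP : P ⊆ G₂.neighborSet z)

omit [DecidablePred (· ∈ P)] in
include hxy hP in
lemma potential_dhgoGraph_of_mem_of_mem (hx : x ∈ R₁) (hy : y ∈ R₁) :
    potential k (dhgoGraph G₁ G₂ x y z P) (R₁.disjSum R₂) =
      potential k G₁ R₁ + potential k G₂ (insert z (R₂.map (.subtype _)))
        - ((k : ℤ) + 1) * ((k : ℤ) - 2) + 2 * ((k : ℤ) - 1) := by
  classical
  rw [potential_dhgoGraph_disjSum _ _ _ _ _ hxy, potential_insert_of_notMem _ _ (by simp),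
    card_filter_adj_eq_add hP]
  simp only [hx, hy, and_self, if_true]
  push_cast
  ring

include hxy hP in
lemma potential_dhgoGraph_of_mem_of_notMem (hx : x ∈ R₁) (hy : y ∉ R₁) :
    potential k (dhgoGraph G₁ G₂ x y z P) (R₁.disjSum R₂) =
      potential k G₁ R₁ + potential k G₂ (insert z (R₂.map (.subtype _)))
        - ((k : ℤ) + 1) * ((k : ℤ) - 2) +
        2 * ((k : ℤ) - 1) * #{w ∈ R₂.map (.subtype _) | w ∈ G₂.neighborSet z \ P} := by
  rw [potential_dhgoGraph_disjSum _ _ _ _ _ hxy, potential_insert_of_notMem _ _ (by simp),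
    card_filter_adj_eq_add hP]
  simp only [hx, hy, and_false, if_true, if_false]
  push_cast
  ring

include hxy hP in
lemma potential_dhgoGraph_of_notMem_of_mem (hx : x ∉ R₁) (hy : y ∈ R₁) :
    potential k (dhgoGraph G₁ G₂ x y z P) (R₁.disjSum R₂) =
      potential k G₁ R₁ + potential k G₂ (insert z (R₂.map (.subtype _)))
        - ((k : ℤ) + 1) * ((k : ℤ) - 2) +
        2 * ((k : ℤ) - 1) * #{w ∈ R₂.map (.subtype _) | w ∈ P} := by
  rw [potential_dhgoGraph_disjSum _ _ _ _ _ hxy, potential_insert_of_notMem _ _ (by simp),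
    card_filter_adj_eq_add hP]
  simp only [hx, hy, false_and, if_true, if_false]
  push_cast
  ring

omit [DecidablePred (· ∈ P)] in
include hxy in
lemma potential_dhgoGraph_of_notMem_of_notMem (hx : x ∉ R₁) (hy : y ∉ R₁) :
    potential k (dhgoGraph G₁ G₂ x y z P) (R₁.disjSum R₂) =
      potential k G₁ R₁ + potential k G₂ (R₂.map (.subtype _)) := by
  classical
  simp [potential_dhgoGraph_disjSum _ _ _ _ _ hxy, hx, hy]

end DHGO

section OrePotential

open Finset

/-- The invariant carried along the construction of a `k`-Ore graph: the whole vertex set has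
potential `k(k-3)`, and no other nonempty set has smaller potential than a single vertex. -/
structure HasOrePotential (k : ℕ) {V : Type*} (G : SimpleGraph V) [Fintype V] [DecidableEq V]
    [DecidableRel G.Adj] : Prop where
  potential_univ : potential k G univ = k * (k - 3)
  le_potential : ∀ R : Finset V, R.Nonempty → R ≠ univ →
    ((k : ℤ) + 1) * ((k : ℤ) - 2) ≤ potential k G R

namespace HasOrePotential

variable {V W : Type*} [Fintype V] [DecidableEq V] [Fintype W] [DecidableEq W]
  {k : ℕ} {G : SimpleGraph V} [DecidableRel G.Adj]

lemma le_potential_of_nonempty (h : HasOrePotential k G) (hk : 1 ≤ k) {R : Finset V}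
    (hR : R.Nonempty) : (k : ℤ) * (k - 3) ≤ potential k G R := by
  by_cases hR' : R = univ
  · exact (hR' ▸ h.potential_univ).ge
  · have := h.le_potential R hR hR'
    have : (1 : ℤ) ≤ k := mod_cast hk
    linarith

lemma of_iso {H : SimpleGraph W} [DecidableRel H.Adj] (h : HasOrePotential k H) (e : G ≃g H) :
    HasOrePotential k G where
  potential_univ := by
    rw [← potential_map k e.toEmbedding, ← h.potential_univ]
    exact congrArg _ (map_univ_equiv e.toEquiv)
  le_potential R hR hR' := by
    rw [← potential_map k e.toEmbedding]
    refine h.le_potential _ (hR.map) fun hmap => hR' ?_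
    exact map_injective e.toEmbedding.toEmbedding (hmap.trans (map_univ_equiv e.toEquiv).symm)

lemma top (hV : Fintype.card V = k) : HasOrePotential k (⊤ : SimpleGraph V) where
  potential_univ := by
    rw [potential_top, card_univ, hV]
    ring
  le_potential R hR hR' := by
    have card_lt : (#R : ℤ) + 1 ≤ k := mod_cast hV ▸ (card_lt_iff_ne_univ R).2 hR'
    rw [potential_top]
    rcases Nat.eq_or_lt_of_le hR.card_pos with card_eq_one | one_lt_card
    · simp [← card_eq_one]
    · have : (2 : ℤ) ≤ #R := mod_cast one_lt_card
      have factorization : ((k : ℤ) + 1) * (k - 2) * #R - (k - 1) * (#R * (#R - 1))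
          - (k + 1) * (k - 2) = (#R - 1) * ((k - 1) * (k - 1 - #R) + (k - 3)) := by ring
      rw [← sub_nonneg, factorization]
      exact mul_nonneg (by linarith)
        (add_nonneg (mul_nonneg (by linarith) (by linarith)) (by linarith))

lemma le_potential_insert_add (h : HasOrePotential k G) (hk : 1 ≤ k) {v : V} {S : Set V}
    [DecidablePred (· ∈ S)] (hS : S.Nonempty) (hv : v ∉ S) (T : Finset V) :
    ((k : ℤ) + 1) * ((k : ℤ) - 2) ≤
      potential k G (insert v T) + 2 * ((k : ℤ) - 1) * #{w ∈ T | w ∈ S} := by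
  have k_sub_one_nonneg : (0 : ℤ) ≤ 2 * (k - 1) := by
    have : (1 : ℤ) ≤ k := mod_cast hk
    linarith
  by_cases hT : insert v T = univ
  · obtain ⟨w, hw⟩ := hS
    have hwT : w ∈ T := (mem_insert.1 (hT ▸ mem_univ w)).resolve_left (ne_of_mem_of_not_mem hw hv)
    have one_le_card : (1 : ℤ) ≤ #{w ∈ T | w ∈ S} :=
      mod_cast card_pos.2 ⟨w, mem_filter.2 ⟨hwT, hw⟩⟩
    rw [hT, h.potential_univ]
    have := mul_le_mul_of_nonneg_left one_le_card k_sub_one_nonneg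
    linarith
  · have := h.le_potential _ (insert_nonempty v T) hT
    have := mul_nonneg k_sub_one_nonneg (Nat.cast_nonneg #{w ∈ T | w ∈ S})
    linarith

section DHGO

variable {V₁ V₂ : Type*} [Fintype V₁] [DecidableEq V₁] [Fintype V₂] [DecidableEq V₂]
  {G₁ : SimpleGraph V₁} {G₂ : SimpleGraph V₂} [DecidableRel G₁.Adj] [DecidableRel G₂.Adj]
  {x y : V₁} {z : V₂} {P : Set V₂} [DecidableRel (dhgoGraph G₁ G₂ x y z P).Adj]
  (h₁ : HasOrePotential k G₁) (h₂ : HasOrePotential k G₂)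

include h₁ h₂

lemma potential_dhgoGraph_univ (hxy : G₁.Adj x y) (hP : P ⊆ G₂.neighborSet z) :
    potential k (dhgoGraph G₁ G₂ x y z P) univ = k * (k - 3) := by
  rw [← univ_disjSum_univ,
    potential_dhgoGraph_of_mem_of_mem k hxy hP (mem_univ x) (mem_univ y),
    insert_map_subtype_eq_univ.2 rfl, h₁.potential_univ, h₂.potential_univ]
  ring

variable {R₁ : Finset V₁} {R₂ : Finset {w : V₂ // w ≠ z}}

lemma le_potential_dhgoGraph_of_mem_of_mem (hk : 1 ≤ k) (hxy : G₁.Adj x y)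
    (hP : P ⊆ G₂.neighborSet z) (hR : R₁.disjSum R₂ ≠ univ) (hx : x ∈ R₁) (hy : y ∈ R₁) :
    ((k : ℤ) + 1) * ((k : ℤ) - 2) ≤ potential k (dhgoGraph G₁ G₂ x y z P) (R₁.disjSum R₂) := by
  rw [potential_dhgoGraph_of_mem_of_mem k hxy hP hx hy]
  by_cases hR₁ : R₁ = univ
  · have hR₂ : insert z (R₂.map (.subtype _)) ≠ univ := fun h =>
      hR (by rw [hR₁, insert_map_subtype_eq_univ.1 h, univ_disjSum_univ])
    have := h₁.le_potential_of_nonempty hk ⟨x, hx⟩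
    have := h₂.le_potential _ (insert_nonempty _ _) hR₂
    linarith
  · have := h₁.le_potential R₁ ⟨x, hx⟩ hR₁
    have := h₂.le_potential_of_nonempty hk (insert_nonempty z (R₂.map (.subtype _)))
    linarith

lemma le_potential_dhgoGraph_of_mem_of_notMem (hk : 1 ≤ k) (hxy : G₁.Adj x y)
    (hP : P ⊆ G₂.neighborSet z) (hPc : (G₂.neighborSet z \ P).Nonempty)
    (hx : x ∈ R₁) (hy : y ∉ R₁) :
    ((k : ℤ) + 1) * ((k : ℤ) - 2) ≤ potential k (dhgoGraph G₁ G₂ x y z P) (R₁.disjSum R₂) := by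
  classical
  rw [potential_dhgoGraph_of_mem_of_notMem k hxy hP hx hy]
  have := h₁.le_potential R₁ ⟨x, hx⟩ (ne_of_mem_of_not_mem' (mem_univ y) hy).symm
  have := h₂.le_potential_insert_add hk hPc (v := z) (by simp) (R₂.map (.subtype _))
  linarith

lemma le_potential_dhgoGraph_of_notMem_of_mem (hk : 1 ≤ k) (hxy : G₁.Adj x y)
    (hP : P ⊆ G₂.neighborSet z) (hP' : P.Nonempty) (hx : x ∉ R₁) (hy : y ∈ R₁) :
    ((k : ℤ) + 1) * ((k : ℤ) - 2) ≤ potential k (dhgoGraph G₁ G₂ x y z P) (R₁.disjSum R₂) := by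
  classical
  rw [potential_dhgoGraph_of_notMem_of_mem k hxy hP hx hy]
  have := h₁.le_potential R₁ ⟨y, hy⟩ (ne_of_mem_of_not_mem' (mem_univ x) hx).symm
  have := h₂.le_potential_insert_add hk hP' (v := z) (fun hz => (hP hz).ne rfl)
    (R₂.map (.subtype _))
  linarith

lemma le_potential_dhgoGraph_of_notMem_of_notMem (hk : 2 ≤ k) (hxy : G₁.Adj x y)
    (hR : (R₁.disjSum R₂).Nonempty) (hx : x ∉ R₁) (hy : y ∉ R₁) :
    ((k : ℤ) + 1) * ((k : ℤ) - 2) ≤ potential k (dhgoGraph G₁ G₂ x y z P) (R₁.disjSum R₂) := by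
  rw [potential_dhgoGraph_of_notMem_of_notMem k hxy hx hy]
  have bound_nonneg : 0 ≤ ((k : ℤ) + 1) * ((k : ℤ) - 2) :=
    mul_nonneg (by linarith) (sub_nonneg.2 (mod_cast hk))
  have le₁ (h : R₁.Nonempty) := h₁.le_potential R₁ h (ne_of_mem_of_not_mem' (mem_univ x) hx).symm
  have le₂ (h : R₂.Nonempty) := h₂.le_potential (R₂.map (.subtype _)) h.map
    (ne_of_mem_of_not_mem' (mem_univ z) (by simp)).symm
  rcases R₁.eq_empty_or_nonempty with rfl | hR₁
  · simpa using le₂ (by simpa using hR)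
  rcases R₂.eq_empty_or_nonempty with rfl | hR₂
  · simpa using le₁ hR₁
  · linarith [le₁ hR₁, le₂ hR₂]

lemma dhgoGraph (hk : 2 ≤ k) (hxy : G₁.Adj x y) (hP : P ⊆ G₂.neighborSet z)
    (hP' : P.Nonempty) (hPc : (G₂.neighborSet z \ P).Nonempty) :
    HasOrePotential k (dhgoGraph G₁ G₂ x y z P) where
  potential_univ := potential_dhgoGraph_univ h₁ h₂ hxy hP
  le_potential R hR hR' := by
    have hk' : 1 ≤ k := one_le_two.trans hk
    rw [← toLeft_disjSum_toRight (u := R)] at hR hR' ⊢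
    by_cases hx : x ∈ R.toLeft <;> by_cases hy : y ∈ R.toLeft
    · exact le_potential_dhgoGraph_of_mem_of_mem h₁ h₂ hk' hxy hP hR' hx hy
    · exact le_potential_dhgoGraph_of_mem_of_notMem h₁ h₂ hk' hxy hP hPc hx hy
    · exact le_potential_dhgoGraph_of_notMem_of_mem h₁ h₂ hk' hxy hP hP' hx hy
    · exact le_potential_dhgoGraph_of_notMem_of_notMem h₁ h₂ hk hxy hR hx hy

end DHGO

end HasOrePotential

lemma IsOreFin.hasOrePotential {k n : ℕ} {G : SimpleGraph (Fin n)} [inst : DecidableRel G.Adj]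
    (hG : IsOreFin k G) (hk : 2 ≤ k) : HasOrePotential k G := by
  induction hG generalizing inst with
  | complete h => exact (HasOrePotential.top (Fintype.card_fin k)).of_iso h.some
  | comp _ _ h ih₁ ih₂ =>
    classical
    obtain ⟨x, y, z, P, hxy, hP, hP', hPc, ⟨e⟩⟩ := h
    exact (HasOrePotential.dhgoGraph ih₁ ih₂ hk hxy hP hP' hPc).of_iso e

lemma IsKOre.hasOrePotential {V : Type*} [Fintype V] [DecidableEq V] {k : ℕ}
    {G : SimpleGraph V} [DecidableRel G.Adj] (hG : IsKOre k G) (hk : 2 ≤ k) :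
    HasOrePotential k G := by
  classical
  obtain ⟨_, _, hH, ⟨e⟩⟩ := hG
  exact (hH.hasOrePotential hk).of_iso e

end OrePotential

theorem kOre_proper_subset_potential_general {V : Type*} [Fintype V] [DecidableEq V] (k : ℕ)
    (hk : 2 ≤ k) (G : SimpleGraph V) [DecidableRel G.Adj] (hG : IsKOre k G)
    (R : Finset V) (hR : R.Nonempty) (hR' : R ≠ Finset.univ) :
    ((k : ℤ) + 1) * ((k : ℤ) - 2) ≤ potential k G R :=
  (hG.hasOrePotential hk).le_potential R hR hR'

/-- **Claim.** Let `k ≥ 4`, let `G` be a `k`-Ore graph, and let `R` be a nonempty proper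
subset of `V(G)`. Then `ρ_{k,G}(R) ≥ (k+1)(k-2)`. -/
theorem kOre_proper_subset_potential {V : Type*} [Fintype V] [DecidableEq V] (k : ℕ)
    (hk : 4 ≤ k) (G : SimpleGraph V) [DecidableRel G.Adj] (hG : IsKOre k G)
    (R : Finset V) (hR : R.Nonempty) (hR' : R ≠ Finset.univ) :
    ((k : ℤ) + 1) * ((k : ℤ) - 2) ≤ potential k G R :=
  kOre_proper_subset_potential_general k (by omega) G hG R hR hR'
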